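/- The number of isomorphism classes of three-card hands of the SET deck is exactly 20; that is, the quotient of the set of 3-element subsets of the deck by the isomorphism relation has exactly 20 elements. -/

import Mathlib

/-- A card of the SET deck: four attributes, each with three values. -/
abbrev Card := Fin 4 → Fin 3

/-- The deck map induced by a permutation `ψ` of attributes and a family `θ` of value
permutations: it sends a card `x` to the card `y` with `y (ψ a) = θ a (x a)` for all `a`. -/
def deckMap (ψ : Equiv.Perm (Fin 4)) (θ : Fin 4 → Equiv.Perm (Fin 3)) (x : Card) : Card :=
  fun b => θ (ψ.symm b) (x (ψ.symm b))

/-- Two hands are isomorphic if some induced deck map restricts to a bijection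
of one onto the other. -/
def Isomorphic (H H' : Finset Card) : Prop :=
  ∃ (ψ : Equiv.Perm (Fin 4)) (θ : Fin 4 → Equiv.Perm (Fin 3)),
    H.image (deckMap ψ θ) = H'


/-!
Each attribute partitions a hand by grouping the cards with the same value. Relabelling the values
of an attribute does not change its partition, and two attributes with the same partition differ
by such a relabelling; hence a bijection between two hands is induced by a deck map if and only if
it respects the multisets of partitions given by the four attributes.

A three-element set has five partitions: the trivial one, the discrete one, and the three
isolating a single point. As bijections may permute the latter freely, the class of a three-card
hand is determined by the number `s` of trivial partitions and the multiset `{p, q, r}` of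
multiplicities of the isolating ones. Such data occur if and only if `s + p + q + r ≤ 4` and each
of `s + p`, `s + q`, `s + r` is less than `4`, the latter because two cards are equal exactly when
no attribute tells them apart. There are 20 possibilities.
-/

open Finset Function

section Counting

theorem map_univ_val_eq_map_univ_val_iff {β β' γ : Type*} [Fintype β] [Fintype β']
    {f : β → γ} {g : β' → γ} :
    univ.val.map f = univ.val.map g ↔ ∃ e : β ≃ β', ∀ b, g (e b) = f b := by
  classical
  constructor
  · intro h
    have card_fiber_eq (c : γ) : Fintype.card {b // f b = c} = Fintype.card {b // g b = c} := by
      simpa only [Multiset.count_map, eq_comm (a := c), ← Finset.filter_val, Finset.card_val,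
        ← Fintype.card_subtype] using congrArg (Multiset.count c) h
    exact ⟨Equiv.ofFiberEquiv fun c => Fintype.equivOfCardEq (card_fiber_eq c),
      Equiv.ofFiberEquiv_map _⟩
  · rintro ⟨e, he⟩
    rw [← Multiset.map_univ_val_equiv e, Multiset.map_map]
    exact Multiset.map_congr rfl fun b _ => (he b).symm

theorem exists_map_univ_val_eq {β γ : Type*} [Fintype β] {s : Multiset γ}
    (hs : Multiset.card s = Fintype.card β) : ∃ f : β → γ, univ.val.map f = s := by
  classical
  have e : β ≃ s := Fintype.equivOfCardEq (by rw [Multiset.card_coe, hs])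
  refine ⟨fun b => e b, ?_⟩
  conv_rhs => rw [← Multiset.map_univ_coe s]
  exact map_univ_val_eq_map_univ_val_iff.2 ⟨e, fun _ => rfl⟩

theorem count_add_count_lt_card_iff {γ : Type*} [DecidableEq γ] {s : Multiset γ} {b c : γ}
    (hbc : b ≠ c) :
    s.count b + s.count c < Multiset.card s ↔ ∃ d ∈ s, d ≠ b ∧ d ≠ c := by
  have card_split : Multiset.card s =
      s.count b + s.count c + s.countP (fun d => d ≠ b ∧ d ≠ c) := by
    induction s using Multiset.induction with
    | empty => simp
    | cons d s ih =>
      simp only [Multiset.card_cons, Multiset.count_cons, Multiset.countP_cons, ih]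
      grind
  rw [card_split, Nat.lt_add_right_iff_pos, Multiset.countP_pos]

end Counting

section Kernel

variable {κ α : Type*}

theorem ker_eq_ker_iff_exists_perm [Finite κ] {u v : κ → α} :
    Setoid.ker u = Setoid.ker v ↔ ∃ θ : Equiv.Perm α, ∀ k, θ (u k) = v k := by
  constructor
  · intro h
    obtain ⟨θ, hθ⟩ := Equiv.Perm.exists_extending_pair (Setoid.kerLift u)
      (Quotient.lift v h.le) (Setoid.kerLift_injective u)
      ((Setoid.lift_injective_iff_ker_eq_of_le h.le).2 h.symm)
    exact ⟨θ, fun k => hθ ⟦k⟧⟩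
  · rintro ⟨θ, hθ⟩
    ext i j
    simp only [Setoid.ker_def, ← hθ, θ.apply_eq_iff_eq]

theorem exists_ker_eq (e : κ ↪ α) (r : Setoid κ) : ∃ u : κ → α, Setoid.ker u = r := by
  refine ⟨fun k => e (Quotient.mk r k).out, ?_⟩
  ext i j
  rw [Setoid.ker_def, e.apply_eq_iff_eq, Quotient.out_inj]
  exact Quotient.eq

end Kernel

section Isolating

variable {κ : Type*}

/-- The partition of `κ` into `{k}` and its complement. -/
def isolating (k : κ) : Setoid κ := Setoid.ker (· = k)

theorem isolating_rel {i j k : κ} : isolating k i j ↔ (i = k ↔ j = k) := by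
  rw [isolating, Setoid.ker_def, eq_iff_iff]

theorem comap_isolating {κ' : Type*} (e : κ ≃ κ') (k : κ) :
    (isolating (e k)).comap e = isolating k := by
  ext i j
  simp only [Setoid.comap_rel, isolating_rel, e.apply_eq_iff_eq]

theorem setoid_top_ne_bot [Nontrivial κ] : (⊤ : Setoid κ) ≠ ⊥ := by
  obtain ⟨i, j, hij⟩ := exists_pair_ne κ
  exact fun h => hij (Setoid.eq_top_iff.1 h.symm i j)

theorem isolating_ne_top [Nontrivial κ] (k : κ) : isolating k ≠ ⊤ := by
  obtain ⟨j, hj⟩ := exists_ne k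
  intro h
  exact hj ((isolating_rel.1 (Setoid.eq_top_iff.1 h j k)).2 rfl)

variable [Fintype κ]

theorem exists_ne_and_ne_of_two_lt_card (hκ : 2 < Fintype.card κ) (i j : κ) :
    ∃ k, k ≠ i ∧ k ≠ j := by
  classical
  obtain ⟨k, -, hk⟩ := exists_mem_notMem_of_card_lt_card (s := {i, j}) (t := univ)
    (card_le_two.trans_lt (by rwa [card_univ]))
  exact ⟨k, by simpa only [mem_insert, mem_singleton, not_or] using hk⟩

theorem exists_pair_ne_of_two_lt_card (hκ : 2 < Fintype.card κ) (k : κ) :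
    ∃ i j, i ≠ j ∧ i ≠ k ∧ j ≠ k := by
  obtain ⟨i, hik, -⟩ := exists_ne_and_ne_of_two_lt_card hκ k k
  obtain ⟨j, hji, hjk⟩ := exists_ne_and_ne_of_two_lt_card hκ i k
  exact ⟨i, j, hji.symm, hik, hjk⟩

theorem eq_or_eq_or_eq_of_card_eq_three (hκ : Fintype.card κ = 3) {i j k : κ} (hij : i ≠ j)
    (hik : i ≠ k) (hjk : j ≠ k) (l : κ) : l = i ∨ l = j ∨ l = k := by
  classical
  have univ_eq : {i, j, k} = univ :=
    eq_univ_of_card _ (by rw [card_eq_three.2 ⟨i, j, k, hij, hik, hjk, rfl⟩, hκ])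
  simpa only [← univ_eq, mem_insert, mem_singleton] using mem_univ l

theorem rel_iff_eq_top_or_eq_isolating (hκ : Fintype.card κ = 3) {i j k : κ} (hij : i ≠ j)
    (hik : i ≠ k) (hjk : j ≠ k) {r : Setoid κ} : r i j ↔ r = ⊤ ∨ r = isolating k := by
  have cover := eq_or_eq_or_eq_of_card_eq_three hκ hij hik hjk
  constructor
  · intro r_ij
    by_cases r_ik : r i k
    · left
      have r_i (l : κ) : r i l := by
        obtain rfl | rfl | rfl := cover l
        exacts [r.refl' _, r_ij, r_ik]
      exact Setoid.eq_top_iff.2 fun l m => r.trans' (r.symm' (r_i l)) (r_i m)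
    · right
      have r_i {l : κ} (hl : l ≠ k) : r i l := by
        obtain rfl | rfl | rfl := cover l
        exacts [r.refl' _, r_ij, absurd rfl hl]
      ext l m
      rw [isolating_rel]
      by_cases hl : l = k <;> by_cases hm : m = k
      · simp only [hl, hm, r.refl']
      · exact iff_of_false (fun h => r_ik (r.trans' (r_i hm) (r.symm' (hl ▸ h)))) (by tauto)
      · exact iff_of_false (fun h => r_ik (r.trans' (r_i hl) (hm ▸ h))) (by tauto)
      · exact iff_of_true (r.trans' (r.symm' (r_i hl)) (r_i hm)) (iff_of_false hl hm)
  · rintro (rfl | rfl)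
    · exact trivial
    · exact isolating_rel.2 (iff_of_false hik hjk)

theorem eq_top_or_eq_bot_or_eq_isolating (hκ : Fintype.card κ = 3) (r : Setoid κ) :
    r = ⊤ ∨ r = ⊥ ∨ ∃ k, r = isolating k := by
  by_cases hr : ∃ i j, i ≠ j ∧ r i j
  · obtain ⟨i, j, hij, r_ij⟩ := hr
    obtain ⟨k, hki, hkj⟩ := exists_ne_and_ne_of_two_lt_card (by omega) i j
    have := (rel_iff_eq_top_or_eq_isolating hκ hij hki.symm hkj.symm).1 r_ij
    tauto
  · push Not at hr
    right; left
    ext i j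
    exact ⟨fun h => by_contra fun hij => hr i j hij h, fun h => h ▸ r.refl' _⟩

theorem isolating_ne_bot (hκ : 2 < Fintype.card κ) (k : κ) : isolating k ≠ ⊥ := by
  obtain ⟨i, j, hij, hik, hjk⟩ := exists_pair_ne_of_two_lt_card hκ k
  intro h
  have rel_ij : isolating k i j := isolating_rel.2 (iff_of_false hik hjk)
  rw [h] at rel_ij
  exact hij rel_ij

theorem isolating_injective (hκ : 2 < Fintype.card κ) : Injective (isolating (κ := κ)) := by
  intro k l hkl
  by_contra hne
  obtain ⟨i, hik, hil⟩ := exists_ne_and_ne_of_two_lt_card hκ k l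
  have rel_il : isolating k i l := isolating_rel.2 (iff_of_false hik (Ne.symm hne))
  rw [hkl, isolating_rel] at rel_il
  exact hil (rel_il.2 rfl)

end Isolating

section Profile

variable {κ ι α : Type*} [Fintype ι]

/-- The multiset of partitions of a family `x` of cards induced by the attributes in `ι`, each
attribute grouping together the members of the family with the same value. -/
def profile (x : κ → ι → α) : Multiset (Setoid κ) :=
  univ.val.map fun a => Setoid.ker fun k => x k a

theorem card_profile (x : κ → ι → α) : Multiset.card (profile x) = Fintype.card ι := by
  rw [profile, Multiset.card_map, card_val, card_univ]

theorem profile_comp {κ' : Type*} (x : κ' → ι → α) (e : κ → κ') :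
    profile (x ∘ e) = (profile x).map (Setoid.comap e) := by
  rw [profile, profile, Multiset.map_map]
  rfl

theorem exists_profile_eq (e : κ ↪ α) {P : Multiset (Setoid κ)}
    (hP : Multiset.card P = Fintype.card ι) : ∃ x : κ → ι → α, profile x = P := by
  obtain ⟨r, rfl⟩ := exists_map_univ_val_eq hP
  choose u hu using fun a => exists_ker_eq e (r a)
  exact ⟨fun k a => u a k, Multiset.map_congr rfl fun a _ => hu a⟩

open Classical in
theorem injective_iff_count_profile_lt [Fintype κ] (hκ : Fintype.card κ = 3) (x : κ → ι → α) :
    Injective x ↔ ∀ k, (profile x).count ⊤ + (profile x).count (isolating k) < Fintype.card ι := by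
  have : Nontrivial κ := Fintype.one_lt_card_iff_nontrivial.1 (by omega)
  simp only [← card_profile x, count_add_count_lt_card_iff (isolating_ne_top _).symm]
  have separates {i j k : κ} (hij : i ≠ j) (hik : i ≠ k) (hjk : j ≠ k) :
      x i ≠ x j ↔ ∃ r ∈ profile x, r ≠ ⊤ ∧ r ≠ isolating k := by
    simp only [ne_eq, ← not_or, ← rel_iff_eq_top_or_eq_isolating hκ hij hik hjk, funext_iff,
      profile, Multiset.mem_map, mem_val, mem_univ, true_and, exists_exists_eq_and, Setoid.ker_def,
      not_forall]
  constructor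
  · intro hx k
    obtain ⟨i, j, hij, hik, hjk⟩ := exists_pair_ne_of_two_lt_card (by omega) k
    exact (separates hij hik hjk).1 (hx.ne hij)
  · intro h i j hx
    by_contra hij
    obtain ⟨k, hki, hkj⟩ := exists_ne_and_ne_of_two_lt_card (by omega) i j
    exact (separates hij hki.symm hkj.symm).2 (h k) hx

end Profile

section Signature

variable {κ κ' ι α : Type*} [Fintype κ] [Fintype κ'] [Fintype ι]

open Classical in
/-- The multiplicity of the trivial partition in `P`, together with the multiset of multiplicities
of the partitions isolating one point: an invariant of `P` under permutations of `κ`. The discrete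
partition is left out because, for `κ` of size three, its multiplicity follows from the size
of `P`. -/
noncomputable def signature (P : Multiset (Setoid κ)) : ℕ × Multiset ℕ :=
  (P.count ⊤, univ.val.map fun k => P.count (isolating k))

theorem signature_map_comap (e : κ ≃ κ') (P : Multiset (Setoid κ')) :
    signature (P.map (Setoid.comap e)) = signature P := by
  classical
  have count_comap (r : Setoid κ') :
      (P.map (Setoid.comap e)).count (r.comap e) = P.count r :=
    Multiset.count_map_eq_count' _ _ (Setoid.comap_injective e e.surjective) r
  refine Prod.ext (count_comap ⊤) (map_univ_val_eq_map_univ_val_iff.2 ⟨e, fun k => ?_⟩)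
  rw [← count_comap, comap_isolating]

theorem signature_profile_comp (x : κ' → ι → α) (e : κ ≃ κ') :
    signature (profile (x ∘ e)) = signature (profile x) := by
  rw [profile_comp, signature_map_comap]

theorem count_top_add_count_bot_add_sum_count_isolating [DecidableEq (Setoid κ)]
    (hκ : Fintype.card κ = 3) (P : Multiset (Setoid κ)) :
    P.count ⊤ + P.count ⊥ + ∑ k, P.count (isolating k) = Multiset.card P := by
  have two_lt_card : 2 < Fintype.card κ := by omega
  have : Nontrivial κ := Fintype.one_lt_card_iff_nontrivial.1 (by omega)
  have h : ∀ r ∈ P, r ∈ insert ⊤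
      (insert ⊥ (univ.map ⟨isolating, isolating_injective two_lt_card⟩)) := by
    intro r _
    obtain rfl | rfl | ⟨k, rfl⟩ := eq_top_or_eq_bot_or_eq_isolating hκ r <;> simp
  rw [← Multiset.sum_count_eq_card h, sum_insert, sum_insert, sum_map, add_assoc]
  · rfl
  · simp [isolating_ne_bot two_lt_card]
  · simp [isolating_ne_top, setoid_top_ne_bot]

theorem exists_equiv_map_comap_eq_of_signature_eq (hκ : Fintype.card κ = 3)
    {P : Multiset (Setoid κ)} {P' : Multiset (Setoid κ')}
    (hcard : Multiset.card P = Multiset.card P') (hsig : signature P = signature P') :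
    ∃ e : κ ≃ κ', P = P'.map (Setoid.comap e) := by
  classical
  obtain ⟨e, he⟩ := map_univ_val_eq_map_univ_val_iff.1 (congrArg Prod.snd hsig)
  refine ⟨e, ?_⟩
  set Q := P'.map (Setoid.comap e) with hQ
  have count_top : P.count ⊤ = Q.count ⊤ :=
    congrArg Prod.fst (hsig.trans (signature_map_comap e P').symm)
  have count_isolating (k : κ) : P.count (isolating k) = Q.count (isolating k) := by
    rw [← he, hQ, ← comap_isolating e,
      Multiset.count_map_eq_count' _ _ (Setoid.comap_injective e e.surjective)]
  have card_eq : Multiset.card P = Multiset.card Q := by rw [hcard, hQ, Multiset.card_map]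
  have count_bot : P.count ⊥ = Q.count ⊥ := by
    simp only [← count_top_add_count_bot_add_sum_count_isolating hκ, count_top,
      count_isolating] at card_eq
    omega
  ext r
  obtain rfl | rfl | ⟨k, rfl⟩ := eq_top_or_eq_bot_or_eq_isolating hκ r
  exacts [count_top, count_bot, count_isolating k]

theorem exists_card_eq_and_signature_eq (hκ : 2 < Fintype.card κ) {n : ℕ}
    {σ : ℕ × Multiset ℕ} (hcard : Multiset.card σ.2 = Fintype.card κ) (hsum : σ.1 + σ.2.sum ≤ n) :
    ∃ P : Multiset (Setoid κ), Multiset.card P = n ∧ signature P = σ := by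
  classical
  obtain ⟨s, M⟩ := σ
  have : Nontrivial κ := Fintype.one_lt_card_iff_nontrivial.1 (by omega)
  obtain ⟨p, rfl⟩ := exists_map_univ_val_eq hcard
  let P : Multiset (Setoid κ) := .replicate s ⊤ + .replicate (n - (s + ∑ k, p k)) ⊥ +
    ∑ k, .replicate (p k) (isolating k)
  have count_top : P.count ⊤ = s := by
    simp [P, Multiset.count_sum', Multiset.count_replicate, isolating_ne_top,
      setoid_top_ne_bot.symm]
  have count_isolating (k : κ) : P.count (isolating k) = p k := by
    simp [P, Multiset.count_sum', Multiset.count_replicate, (isolating_ne_top k).symm,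
      (isolating_ne_bot hκ k).symm, (isolating_injective hκ).eq_iff]
  refine ⟨P, ?_, ?_⟩
  · have : s + ∑ k, p k ≤ n := hsum
    simp only [P, Multiset.card_add, Multiset.card_replicate, Multiset.card_sum]
    omega
  · simp only [signature, count_top, count_isolating]

end Signature

section Admissible

/-- The signatures realized by three distinct cards with `n` attributes. The sum counts distinct
attributes, and the strict inequalities say that any two of the cards are told apart. Bounding all
entries by `n` loses nothing and makes the set finite by construction. -/
def admissibleSignatures (n : ℕ) : Finset (ℕ × Multiset ℕ) :=
  {σ ∈ range (n + 1) ×ˢ ((range (n + 1)).sym 3).image (↑) |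
    σ.1 + σ.2.sum ≤ n ∧ ∀ m ∈ σ.2, σ.1 + m < n}

theorem mem_admissibleSignatures {n : ℕ} {σ : ℕ × Multiset ℕ} :
    σ ∈ admissibleSignatures n ↔
      Multiset.card σ.2 = 3 ∧ σ.1 + σ.2.sum ≤ n ∧ ∀ m ∈ σ.2, σ.1 + m < n := by
  simp only [admissibleSignatures, mem_filter, mem_product, mem_range, mem_image, mem_sym_iff,
    and_congr_left_iff]
  rintro ⟨hsum, hlt⟩
  constructor
  · rintro ⟨-, M, -, hM⟩
    exact hM ▸ M.2
  · intro hcard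
    refine ⟨by omega, ⟨σ.2, hcard⟩, fun m hm => ?_, rfl⟩
    have := hlt m hm
    omega

theorem card_admissibleSignatures_four : #(admissibleSignatures 4) = 20 := by
  decide +kernel

theorem exists_injective_signature_profile_eq_iff {κ ι α : Type*} [Fintype κ] [Fintype ι]
    (hκ : Fintype.card κ = 3) (e : κ ↪ α) {σ : ℕ × Multiset ℕ} :
    (∃ x : κ → ι → α, Injective x ∧ signature (profile x) = σ) ↔
      σ ∈ admissibleSignatures (Fintype.card ι) := by
  classical
  rw [mem_admissibleSignatures]
  constructor
  · rintro ⟨x, hx, rfl⟩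
    have total := count_top_add_count_bot_add_sum_count_isolating hκ (profile x)
    rw [card_profile] at total
    refine ⟨by simp [signature, hκ], ?_, ?_⟩
    · change _ + ∑ k, (profile x).count (isolating k) ≤ _
      dsimp only [signature]
      omega
    · simpa [signature] using (injective_iff_count_profile_lt hκ x).1 hx
  · rintro ⟨hcard, hsum, hlt⟩
    obtain ⟨P, hP, rfl⟩ := exists_card_eq_and_signature_eq (by omega) (hcard.trans hκ.symm) hsum
    obtain ⟨x, rfl⟩ := exists_profile_eq e hP
    exact ⟨x, (injective_iff_count_profile_lt hκ x).2 (by simpa [signature] using hlt), rfl⟩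

end Admissible

section Deck

theorem deckMap_eq_iff {ψ : Equiv.Perm (Fin 4)} {θ : Fin 4 → Equiv.Perm (Fin 3)} {x y : Card} :
    deckMap ψ θ x = y ↔ ∀ a, θ a (x a) = y (ψ a) := by
  rw [funext_iff, ← ψ.forall_congr_right]
  simp only [deckMap, Equiv.symm_apply_apply]

theorem deckMap_injective (ψ : Equiv.Perm (Fin 4)) (θ : Fin 4 → Equiv.Perm (Fin 3)) :
    Injective (deckMap ψ θ) := by
  intro x y h
  funext a
  apply (θ a).injective
  rw [deckMap_eq_iff.1 h a, deckMap_eq_iff.1 rfl a]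

theorem exists_deckMap_eq_iff_profile_eq {κ : Type*} [Finite κ] {x y : κ → Card} :
    (∃ ψ θ, ∀ k, deckMap ψ θ (x k) = y k) ↔ profile x = profile y := by
  simp only [profile, map_univ_val_eq_map_univ_val_iff, eq_comm (b := Setoid.ker fun k => x k _),
    ker_eq_ker_iff_exists_perm, Classical.skolem, deckMap_eq_iff, forall_comm (α := κ)]

theorem isomorphic_iff_exists_equiv {H H' : Finset Card} :
    Isomorphic H H' ↔ ∃ e : H ≃ H', ∃ ψ θ, ∀ x : H, deckMap ψ θ x = e x := by
  constructor
  · rintro ⟨ψ, θ, rfl⟩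
    refine ⟨.ofBijective (fun x => ⟨deckMap ψ θ x, mem_image_of_mem _ x.2⟩) ⟨?_, ?_⟩, ψ, θ,
      fun _ => rfl⟩
    · exact fun x y h => Subtype.ext (deckMap_injective ψ θ (congrArg Subtype.val h))
    · rintro ⟨_, hy⟩
      obtain ⟨x, hx, rfl⟩ := mem_image.1 hy
      exact ⟨⟨x, hx⟩, rfl⟩
  · rintro ⟨e, ψ, θ, h⟩
    refine ⟨ψ, θ, ?_⟩
    ext y
    rw [mem_image]
    constructor
    · rintro ⟨x, hx, rfl⟩
      exact h ⟨x, hx⟩ ▸ (e ⟨x, hx⟩).2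
    · intro hy
      exact ⟨e.symm ⟨y, hy⟩, (e.symm ⟨y, hy⟩).2, by rw [h, e.apply_symm_apply]⟩

/-- The signature of a hand, seen as a family of cards indexed by itself. -/
noncomputable def handSignature (H : Finset Card) : ℕ × Multiset ℕ :=
  signature (profile ((↑) : H → Card))

theorem isomorphic_iff_handSignature_eq {H H' : Finset Card} (hH : #H = 3) :
    Isomorphic H H' ↔ handSignature H = handSignature H' := by
  simp only [isomorphic_iff_exists_equiv, exists_deckMap_eq_iff_profile_eq]
  constructor
  · rintro ⟨e, he⟩
    exact (congrArg signature he).trans (signature_profile_comp _ e)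
  · intro h
    obtain ⟨e, he⟩ := exists_equiv_map_comap_eq_of_signature_eq (by simpa)
      (by rw [card_profile, card_profile]) h
    exact ⟨e, he.trans (profile_comp _ e).symm⟩

theorem handSignature_map_univ {κ : Type*} [Fintype κ] (x : κ ↪ Card) :
    handSignature (univ.map x) = signature (profile x) := by
  let e : κ ≃ univ.map x :=
    (Equiv.ofInjective x x.injective).trans (Equiv.subtypeEquivRight (by simp))
  exact (signature_profile_comp _ e).symm

theorem range_handSignature :
    Set.range (fun H : {H : Finset Card // #H = 3} => handSignature H.1) =
      admissibleSignatures 4 := by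
  ext σ
  rw [mem_coe, Set.mem_range, ← Fintype.card_fin 4]
  constructor
  · rintro ⟨⟨H, hH⟩, rfl⟩
    exact (exists_injective_signature_profile_eq_iff (by simpa)
      (H.equivFinOfCardEq hH).toEmbedding).1 ⟨_, Subtype.val_injective, rfl⟩
  · intro hσ
    obtain ⟨x, hx, rfl⟩ := (exists_injective_signature_profile_eq_iff
      (Fintype.card_fin 3) (.refl (Fin 3))).2 hσ
    exact ⟨⟨univ.map ⟨x, hx⟩, by rw [card_map, card_univ, Fintype.card_fin]⟩,
      handSignature_map_univ ⟨x, hx⟩⟩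

end Deck

/-- There are exactly 20 isomorphism classes of three-card hands: the quotient of the
set of 3-element subsets of the deck by the isomorphism relation has 20 elements. -/
theorem card_isoClasses_three_card_hands :
    Nat.card (Quot fun s t : {s : Finset Card // s.card = 3} =>
      Isomorphic s.1 t.1) = 20 := by
  have isomorphic_eq_ker : (fun s t : {s : Finset Card // s.card = 3} => Isomorphic s.1 t.1) =
      Setoid.ker (fun s : {s : Finset Card // s.card = 3} => handSignature s.1) := by
    ext s t
    exact isomorphic_iff_handSignature_eq s.2
  rw [isomorphic_eq_ker]
  calc
    _ = Nat.card (Set.range fun s : {s : Finset Card // s.card = 3} => handSignature s.1) :=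
      Nat.card_congr (Setoid.quotientKerEquivRange _)
    _ = #(admissibleSignatures 4) := by
      rw [range_handSignature, Nat.card_coe_set_eq, Set.ncard_coe_finset]
    _ = 20 := card_admissibleSignatures_four
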